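/- Let m and n be positive integers with n ≥ 4 even, let 0 ≤ ℓ ≤ n−1 be an integer of the same parity as m, let Γ = HTG(m,n,ℓ) identified with Cay(G;{t,tx,ty}), and let Aut_c(Γ) be the group of color permuting automorphisms of Γ. Then the set of color permuting automorphisms of Γ fixing the identity vertex 1 coincides with Aut(G; {t, tx, ty}), Aut_c(Γ) is the semidirect product G_L ⋊ Aut(G; {t, tx, ty}), and Γ is a normal Cayley graph of G if and only if Aut(Γ) = Aut_c(Γ). -/

import Mathlib

namespace HTGPaper

/-- The honeycomb toroidal graph `HTG(m,n,ℓ)`. -/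
def HTG (m n ℓ : ℕ) : SimpleGraph (ZMod m × ZMod n) :=
  SimpleGraph.fromRel (fun v w =>
    (v.1 = w.1 ∧ (w.2 = v.2 + 1 ∨ w.2 = v.2 - 1)) ∨
    (v.1.val ≠ m - 1 ∧ w.1 = v.1 + 1 ∧ w.2 = v.2 ∧ v.1.val % 2 ≠ v.2.val % 2) ∨
    (v.1.val = m - 1 ∧ w.1 = 0 ∧ w.2 = v.2 + (ℓ : ZMod n) ∧ v.2.val % 2 = m % 2))

/-- Generators of the generalized dihedral group `G`. -/
inductive Gen | t | x | y

/-- Relators of the presentation of `G`. -/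
def rels (m n ℓ : ℕ) : Set (FreeGroup Gen) :=
  {FreeGroup.of Gen.t ^ 2,
   FreeGroup.of Gen.x ^ (n / 2),
   FreeGroup.of Gen.y ^ m * (FreeGroup.of Gen.x ^ ((ℓ + m) / 2))⁻¹,
   FreeGroup.of Gen.t * FreeGroup.of Gen.x * (FreeGroup.of Gen.t)⁻¹ * FreeGroup.of Gen.x,
   FreeGroup.of Gen.t * FreeGroup.of Gen.y * (FreeGroup.of Gen.t)⁻¹ * FreeGroup.of Gen.y,
   FreeGroup.of Gen.x * FreeGroup.of Gen.y * (FreeGroup.of Gen.x)⁻¹ * (FreeGroup.of Gen.y)⁻¹}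

/-- The group `G = ⟨t,x,y | t², x^{n/2}, y^m x^{-(ℓ+m)/2}, txt⁻¹x, tyt⁻¹y, [x,y]⟩`. -/
abbrev G (m n ℓ : ℕ) : Type := PresentedGroup (rels m n ℓ)

def gent (m n ℓ : ℕ) : G m n ℓ := PresentedGroup.of Gen.t
def genx (m n ℓ : ℕ) : G m n ℓ := PresentedGroup.of Gen.x
def geny (m n ℓ : ℕ) : G m n ℓ := PresentedGroup.of Gen.y

/-- The connection set `{t, tx, ty}`. -/
def S (m n ℓ : ℕ) : Set (G m n ℓ) :=
  {gent m n ℓ, gent m n ℓ * genx m n ℓ, gent m n ℓ * geny m n ℓ}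

/-- The Cayley graph of a group with respect to a subset. -/
def cayley (H : Type*) [Group H] (T : Set H) : SimpleGraph H :=
  SimpleGraph.fromRel (fun g h => ∃ s ∈ T, h = g * s)

/-- The Cayley graph of an additive group with respect to a subset. -/
def addCayley (H : Type*) [AddGroup H] (T : Set H) : SimpleGraph H :=
  SimpleGraph.fromRel (fun g h => ∃ s ∈ T, h = g + s)

/-- `Cay(H;T)` is a normal Cayley graph of `H` if the left regular representation `H_L`
is a normal subgroup of the automorphism group, i.e. every conjugate of a left
translation by a graph automorphism is again a left translation. -/
def IsNormalCayley (H : Type*) [Group H] (T : Set H) : Prop :=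
  ∀ (f : cayley H T ≃g cayley H T) (a : H), ∃ b : H,
    ∀ g : H, f (a * f.symm g) = b * g

/-- An `s`-arc of a graph: `s+1` vertices, consecutive ones adjacent, and any three
consecutive vertices pairwise distinct. -/
def IsSArc {V : Type*} (Γ : SimpleGraph V) (s : ℕ) (p : Fin (s + 1) → V) : Prop :=
  (∀ i : Fin s, Γ.Adj (p i.castSucc) (p i.succ)) ∧
  ∀ i j : Fin (s + 1), (i : ℕ) + 2 = (j : ℕ) → p i ≠ p j

/-- A graph is `s`-arc-transitive if its automorphism group is transitive on `s`-arcs. -/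
def IsSArcTransitive {V : Type*} (Γ : SimpleGraph V) (s : ℕ) : Prop :=
  ∀ p q : Fin (s + 1) → V, IsSArc Γ s p → IsSArc Γ s q →
    ∃ f : Γ ≃g Γ, ∀ i, f (p i) = q i

/-- A graph is `s`-arc-regular if its automorphism group is regular on `s`-arcs. -/
def IsSArcRegular {V : Type*} (Γ : SimpleGraph V) (s : ℕ) : Prop :=
  ∀ p q : Fin (s + 1) → V, IsSArc Γ s p → IsSArc Γ s q →
    ∃! f : Γ ≃g Γ, ∀ i, f (p i) = q i

/-- A graph is arc-transitive if it is `1`-arc-transitive. -/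
def IsArcTransitive {V : Type*} (Γ : SimpleGraph V) : Prop :=
  IsSArcTransitive Γ 1

/-- The generalized prism `GPr(k)`. -/
def GPr (k : ℕ) : SimpleGraph (ZMod 2 × ZMod (2 * k)) :=
  SimpleGraph.fromRel (fun v w =>
    (v.1 = w.1 ∧ (w.2 = v.2 + 1 ∨ w.2 = v.2 - 1)) ∨
    (Even v.2.val ∧ w.1 = v.1 + 1 ∧ w.2 = v.2 + 1))

/-- The cubic graph on `k` vertices given by LCF-type data `f`. -/
def lcfGraph (k : ℕ) (f : ℕ → ℤ) : SimpleGraph (ZMod k) :=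
  SimpleGraph.fromRel (fun v w => w = v + 1 ∨ w = v + (f v.val : ZMod k))

/-- The cube graph `Q₃`, LCF notation `[3,-3]⁴`. -/
def cubeGraph : SimpleGraph (ZMod 8) :=
  lcfGraph 8 (fun i => if i % 2 = 0 then 3 else -3)

/-- The Heawood graph, LCF notation `[5,-5]⁷`. -/
def heawood : SimpleGraph (ZMod 14) :=
  lcfGraph 14 (fun i => if i % 2 = 0 then 5 else -5)

/-- The Möbius–Kantor graph, LCF notation `[5,-5]⁸`. -/
def mobiusKantor : SimpleGraph (ZMod 16) :=
  lcfGraph 16 (fun i => if i % 2 = 0 then 5 else -5)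

/-- The Pappus graph, LCF notation `[5,7,-7,7,-7,-5]³`. -/
def pappus : SimpleGraph (ZMod 18) :=
  lcfGraph 18 (fun i =>
    match i % 6 with
    | 0 => 5 | 1 => 7 | 2 => -7 | 3 => 7 | 4 => -7 | _ => -5)

/-- The red edges of `HTG(m,n,ℓ) = Cay(G;{t,tx,ty})`. -/
def Red (m n ℓ : ℕ) : Set (Sym2 (G m n ℓ)) :=
  {e | ∃ g : G m n ℓ, e = s(g, g * gent m n ℓ)}

/-- The blue edges. -/
def Blue (m n ℓ : ℕ) : Set (Sym2 (G m n ℓ)) :=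
  {e | ∃ g : G m n ℓ, e = s(g, g * (gent m n ℓ * genx m n ℓ))}

/-- The green edges. -/
def Green (m n ℓ : ℕ) : Set (Sym2 (G m n ℓ)) :=
  {e | ∃ g : G m n ℓ, e = s(g, g * (gent m n ℓ * geny m n ℓ))}

/-- The three color classes. -/
def colorClasses (m n ℓ : ℕ) : Set (Set (Sym2 (G m n ℓ))) :=
  {Red m n ℓ, Blue m n ℓ, Green m n ℓ}

/-- An automorphism of `Cay(G;{t,tx,ty})` is color permuting if it preserves the
partition of the edges into the three color classes. -/
def IsColorPermuting {m n ℓ : ℕ}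
    (f : cayley (G m n ℓ) (S m n ℓ) ≃g cayley (G m n ℓ) (S m n ℓ)) : Prop :=
  ∀ C ∈ colorClasses m n ℓ, Sym2.map ⇑f '' C ∈ colorClasses m n ℓ

/-- The group `Aut(H;T)` of automorphisms of `H` fixing `T` setwise. -/
def autFixing (H : Type*) [Group H] (T : Set H) : Subgroup (MulAut H) where
  carrier := {φ | ⇑φ '' T = T}
  one_mem' := by
    show ⇑(1 : MulAut H) '' T = T
    simp
  mul_mem' := by
    intro a b ha hb
    show ⇑(a * b) '' T = T
    have h : ⇑(a * b) = ⇑a ∘ ⇑b := rfl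
    rw [h, Set.image_comp]
    rw [show ⇑b '' T = T from hb, show ⇑a '' T = T from ha]
  inv_mem' := by
    intro a ha
    show ⇑a⁻¹ '' T = T
    conv_lhs => rw [← show ⇑a '' T = T from ha]
    rw [← Set.image_comp]
    have h : ⇑a⁻¹ ∘ ⇑a = id := by
      funext g
      simp
    rw [h, Set.image_id]


/-- The color class of the generator `s`. -/
def Col {H : Type*} [Group H] (s : H) : Set (Sym2 H) := {e | ∃ g : H, e = s(g, g * s)}

lemma mem_colorClasses (m n ℓ : ℕ) (C : Set (Sym2 (G m n ℓ))) :
    C ∈ colorClasses m n ℓ ↔ ∃ s ∈ S m n ℓ, C = Col s := by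
  simp only [colorClasses, S, Set.mem_insert_iff, Set.mem_singleton_iff, exists_eq_or_imp,
    exists_eq_left]
  rfl

lemma rel_one {m n ℓ : ℕ} {r : FreeGroup Gen} (h : r ∈ rels m n ℓ) :
    PresentedGroup.mk (rels m n ℓ) r = 1 :=
  PresentedGroup.one_of_mem h

lemma t_sq (m n ℓ : ℕ) : gent m n ℓ * gent m n ℓ = 1 := by
  have h := rel_one (m := m) (n := n) (ℓ := ℓ) (r := FreeGroup.of Gen.t ^ 2) (by simp [rels])
  rw [map_pow, pow_two] at h
  exact h

lemma t_x (m n ℓ : ℕ) : gent m n ℓ * genx m n ℓ * (gent m n ℓ)⁻¹ * genx m n ℓ = 1 := by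
  have h := rel_one (m := m) (n := n) (ℓ := ℓ) (r := FreeGroup.of Gen.t * FreeGroup.of Gen.x *
    (FreeGroup.of Gen.t)⁻¹ * FreeGroup.of Gen.x) (by simp [rels])
  simp only [map_mul, map_inv] at h
  exact h

lemma t_y (m n ℓ : ℕ) : gent m n ℓ * geny m n ℓ * (gent m n ℓ)⁻¹ * geny m n ℓ = 1 := by
  have h := rel_one (m := m) (n := n) (ℓ := ℓ) (r := FreeGroup.of Gen.t * FreeGroup.of Gen.y *
    (FreeGroup.of Gen.t)⁻¹ * FreeGroup.of Gen.y) (by simp [rels])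
  simp only [map_mul, map_inv] at h
  exact h

lemma S_sq {m n ℓ : ℕ} {s : G m n ℓ} (hs : s ∈ S m n ℓ) : s * s = 1 := by
  have ht := t_sq m n ℓ
  have hi : (gent m n ℓ)⁻¹ = gent m n ℓ := inv_eq_of_mul_eq_one_left ht
  have hx := t_x m n ℓ
  have hy := t_y m n ℓ
  rw [hi] at hx hy
  rcases hs with rfl | rfl | rfl
  · exact ht
  · simpa only [mul_assoc] using hx
  · simpa only [mul_assoc] using hy

/-- The sign homomorphism. -/
def sgnGen : Gen → Multiplicative (ZMod 2)
  | Gen.t => Multiplicative.ofAdd 1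
  | Gen.x => 1
  | Gen.y => 1

lemma sgn_rels (m n ℓ : ℕ) : ∀ r ∈ rels m n ℓ, FreeGroup.lift sgnGen r = 1 := by
  intro r hr
  rcases hr with rfl | rfl | rfl | rfl | rfl | rfl <;> simp [sgnGen]
  rfl

lemma S_ne_one {m n ℓ : ℕ} {s : G m n ℓ} (hs : s ∈ S m n ℓ) : s ≠ 1 := by
  intro h
  have h1 := congrArg (PresentedGroup.toGroup (sgn_rels m n ℓ)) h
  have hne : (Multiplicative.ofAdd (1 : ZMod 2)) ≠ 1 := by decide
  apply hne
  rcases hs with rfl | rfl | rfl <;>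
    simpa only [gent, genx, geny, map_mul, map_one, PresentedGroup.toGroup.of, sgnGen, mul_one]
      using h1

lemma S_finite (m n ℓ : ℕ) : (S m n ℓ).Finite := by
  unfold S
  exact Set.toFinite _

lemma closure_S (m n ℓ : ℕ) : Subgroup.closure (S m n ℓ) = ⊤ := by
  rw [eq_top_iff, ← PresentedGroup.closure_range_of (rels m n ℓ), Subgroup.closure_le]
  have ht : gent m n ℓ ∈ Subgroup.closure (S m n ℓ) :=
    Subgroup.subset_closure (by simp [S])
  have hx : gent m n ℓ * genx m n ℓ ∈ Subgroup.closure (S m n ℓ) :=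
    Subgroup.subset_closure (by simp [S])
  have hy : gent m n ℓ * geny m n ℓ ∈ Subgroup.closure (S m n ℓ) :=
    Subgroup.subset_closure (by simp [S])
  rintro _ ⟨i, rfl⟩
  cases i
  · exact ht
  · exact (Subgroup.mul_mem_cancel_left _ ht).1 hx
  · exact (Subgroup.mul_mem_cancel_left _ ht).1 hy

lemma cayley_adj {m n ℓ : ℕ} (g h : G m n ℓ) :
    (cayley (G m n ℓ) (S m n ℓ)).Adj g h ↔ ∃ s ∈ S m n ℓ, h = g * s := by
  simp only [cayley, SimpleGraph.fromRel_adj]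
  constructor
  · rintro ⟨_, ⟨s, hs, h⟩ | ⟨s, hs, h⟩⟩
    · exact ⟨s, hs, h⟩
    · exact ⟨s, hs, by rw [h, mul_assoc, S_sq hs, mul_one]⟩
  · rintro ⟨s, hs, rfl⟩
    exact ⟨fun h => S_ne_one hs (by simpa using h), Or.inl ⟨s, hs, rfl⟩⟩

lemma image_S {m n ℓ : ℕ} (φ : MulAut (G m n ℓ)) (h : ∀ s ∈ S m n ℓ, φ s ∈ S m n ℓ) :
    ⇑φ '' S m n ℓ = S m n ℓ := by
  apply Set.eq_of_subset_of_ncard_le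
  · rintro _ ⟨s, hs, rfl⟩
    exact h s hs
  · rw [Set.ncard_image_of_injective _ φ.injective]
  · exact S_finite m n ℓ

lemma colorPerm_of {m n ℓ : ℕ}
    (f : cayley (G m n ℓ) (S m n ℓ) ≃g cayley (G m n ℓ) (S m n ℓ))
    (a : G m n ℓ) (φ : MulAut (G m n ℓ)) (hφ : ⇑φ '' S m n ℓ = S m n ℓ)
    (hf : ∀ g, f g = a * φ g) : IsColorPermuting f := by
  intro C hC
  rw [mem_colorClasses] at hC ⊢
  obtain ⟨s, hs, rfl⟩ := hC
  refine ⟨φ s, hφ ▸ Set.mem_image_of_mem _ hs, ?_⟩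
  ext e
  constructor
  · rintro ⟨_, ⟨g, rfl⟩, rfl⟩
    exact ⟨a * φ g, by simp [hf, mul_assoc]⟩
  · rintro ⟨g, rfl⟩
    refine ⟨_, ⟨φ.symm (a⁻¹ * g), rfl⟩, ?_⟩
    simp [hf, mul_assoc]

lemma exists_of_hom {m n ℓ : ℕ}
    (f : cayley (G m n ℓ) (S m n ℓ) ≃g cayley (G m n ℓ) (S m n ℓ))
    (h : ∀ g k, f (g * k) = f g * (f 1)⁻¹ * f k) :
    ∃ φ : MulAut (G m n ℓ), ⇑φ '' S m n ℓ = S m n ℓ ∧ ∀ g, f g = f 1 * φ g := by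
  let φ : MulAut (G m n ℓ) :=
    { toEquiv := f.toEquiv.trans (Equiv.mulLeft (f 1)⁻¹)
      map_mul' := by
        intro g k
        change (f 1)⁻¹ * f (g * k) = ((f 1)⁻¹ * f g) * ((f 1)⁻¹ * f k)
        rw [h]
        group }
  have hφ : ∀ g, φ g = (f 1)⁻¹ * f g := fun g => rfl
  refine ⟨φ, image_S φ ?_, fun g => by rw [hφ]; group⟩
  intro s hs
  have hadj : (cayley (G m n ℓ) (S m n ℓ)).Adj (f 1) (f s) :=
    f.map_rel_iff.2 ((cayley_adj _ _).2 ⟨s, hs, by simp⟩)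
  obtain ⟨s', hs', he⟩ := (cayley_adj _ _).1 hadj
  rw [hφ, he]
  simpa using hs'

lemma exists_of_colorPerm {m n ℓ : ℕ}
    (f : cayley (G m n ℓ) (S m n ℓ) ≃g cayley (G m n ℓ) (S m n ℓ))
    (hf : IsColorPermuting f) :
    ∃ φ : MulAut (G m n ℓ), ⇑φ '' S m n ℓ = S m n ℓ ∧ ∀ g, f g = f 1 * φ g := by
  have key : ∀ s ∈ S m n ℓ, ∃ s' : G m n ℓ, ∀ g, f (g * s) = f g * s' := by
    intro s hs
    obtain ⟨s', hs', hC⟩ := (mem_colorClasses _ _ _ _).1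
      (hf (Col s) ((mem_colorClasses _ _ _ _).2 ⟨s, hs, rfl⟩))
    refine ⟨s', fun g => ?_⟩
    have hmem : Sym2.map ⇑f s(g, g * s) ∈ Col s' := hC ▸ Set.mem_image_of_mem _ ⟨g, rfl⟩
    obtain ⟨h, hh⟩ := hmem
    rw [Sym2.map_mk, Sym2.eq_iff] at hh
    rcases hh with ⟨h1, h2⟩ | ⟨h1, h2⟩
    · rw [h1]; exact h2
    · rw [h1, mul_assoc, S_sq hs', mul_one]; exact h2
  have key2 : ∀ s ∈ S m n ℓ, ∀ g, f (g * s) = f g * (f 1)⁻¹ * f s := by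
    intro s hs g
    obtain ⟨s', h⟩ := key s hs
    have h1 := h 1
    rw [one_mul] at h1
    rw [h g, h1]
    group
  apply exists_of_hom
  intro g k
  have hk : k ∈ Subgroup.closure (S m n ℓ) := by rw [closure_S]; trivial
  induction hk using Subgroup.closure_induction generalizing g with
  | mem s hs => exact key2 s hs g
  | one => simp
  | mul a b _ _ iha ihb => rw [← mul_assoc, ihb (g * a), iha g, ihb a]; simp only [mul_assoc]
  | inv a _ iha =>
    have h1 := iha (g * a⁻¹)
    have h2 := iha a⁻¹
    rw [inv_mul_cancel_right] at h1
    rw [inv_mul_cancel] at h2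
    rw [h1]
    have h3 : f a⁻¹ = f 1 * (f a)⁻¹ * f 1 := by
      rw [mul_assoc, ← mul_inv_eq_iff_eq_mul] at h2
      rw [← h2]
      group
    rw [h3]
    group

/-- The color permuting automorphisms of `Γ = HTG(m,n,ℓ) = Cay(G;{t,tx,ty})` fixing the
identity vertex are exactly the elements of `Aut(G;{t,tx,ty})`; `Aut_c(Γ)` is the
semidirect product `G_L ⋊ Aut(G;{t,tx,ty})`; and `Γ` is a normal Cayley graph of `G`
iff `Aut(Γ) = Aut_c(Γ)`. -/
theorem statement12 (m n ℓ : ℕ) (hm : 0 < m) (hn : 4 ≤ n) (hne : Even n)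
    (hl : ℓ ≤ n - 1) (hpar : ℓ % 2 = m % 2) :
    (∀ f : cayley (G m n ℓ) (S m n ℓ) ≃g cayley (G m n ℓ) (S m n ℓ),
      (IsColorPermuting f ∧ f 1 = 1) ↔
        ∃ φ : MulAut (G m n ℓ), ⇑φ '' S m n ℓ = S m n ℓ ∧ ∀ g, f g = φ g) ∧
    (∀ f : cayley (G m n ℓ) (S m n ℓ) ≃g cayley (G m n ℓ) (S m n ℓ),
      IsColorPermuting f ↔
        ∃! aφ : G m n ℓ × MulAut (G m n ℓ),
          ⇑aφ.2 '' S m n ℓ = S m n ℓ ∧ ∀ g, f g = aφ.1 * aφ.2 g) ∧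
    (IsNormalCayley (G m n ℓ) (S m n ℓ) ↔
      ∀ f : cayley (G m n ℓ) (S m n ℓ) ≃g cayley (G m n ℓ) (S m n ℓ),
        IsColorPermuting f) := by
  refine ⟨fun f => ⟨?_, ?_⟩, fun f => ⟨?_, ?_⟩, ?_, ?_⟩
  · rintro ⟨hf, h1⟩
    obtain ⟨φ, hφ, h⟩ := exists_of_colorPerm f hf
    exact ⟨φ, hφ, fun g => by rw [h g, h1, one_mul]⟩
  · rintro ⟨φ, hφ, h⟩
    exact ⟨colorPerm_of f 1 φ hφ (fun g => by rw [h g, one_mul]), by rw [h, map_one]⟩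
  · intro hf
    obtain ⟨φ, hφ, h⟩ := exists_of_colorPerm f hf
    refine ⟨(f 1, φ), ⟨hφ, h⟩, ?_⟩
    rintro ⟨b, ψ⟩ ⟨_, hψ⟩
    have hb : f 1 = b := by simpa using hψ 1
    refine Prod.ext hb.symm (MulEquiv.ext fun g => ?_)
    have h2 := (hψ g).symm.trans (h g)
    rw [hb] at h2
    exact mul_left_cancel h2
  · rintro ⟨⟨a, φ⟩, ⟨hφ, h⟩, _⟩
    exact colorPerm_of f a φ hφ h
  · intro hN f
    obtain ⟨φ, hφ, h⟩ := exists_of_hom f (by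
      intro g k
      obtain ⟨b, hb⟩ := hN f g
      have h1 := hb (f 1)
      have h2 := hb (f k)
      rw [f.symm_apply_apply] at h1 h2
      rw [mul_one] at h1
      rw [h2, h1]
      group)
    exact colorPerm_of f _ φ hφ h
  · intro hall f b
    obtain ⟨φ, hφ, h⟩ := exists_of_colorPerm f (hall f)
    refine ⟨f 1 * φ b * (f 1)⁻¹, fun g => ?_⟩
    obtain ⟨k, rfl⟩ := f.surjective g
    rw [f.symm_apply_apply, h (b * k), h k, map_mul]
    group

end HTGPaper
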